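/- Let G be a finitely presented group admitting a surjective homomorphism ε : G → ℤ. Then there exist a finitely generated subgroup A of G with A ≤ ker ε, subgroups B, C of A, and an isomorphism ψ : B ≃ C, such that G is isomorphic to the HNN extension of A over ψ by an isomorphism that carries the canonical copy of A inside the HNN extension to the inclusion of A in G. -/

import Mathlib

/-- A group is finitely presented if it is isomorphic to the quotient of a free group of
finite rank by the normal closure of a finite set of relators. -/
def IsFinitelyPresented (G : Type*) [Group G] : Prop :=
  ∃ (n : ℕ) (R : Set (FreeGroup (Fin n))), R.Finite ∧ Nonempty (G ≃* PresentedGroup R)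

/-!
Let `ε t = 1` and let `A₀ ≤ ker ε` be finitely generated with `G = ⟨A₀, t⟩`. Put
`Aₙ₊₁ = ⟨Aₙ, t Aₙ t⁻¹, t⁻¹ Aₙ t⟩`; these finitely generated groups exhaust `ker ε`. Let `Hₙ` be the
HNN extension of `Aₙ` whose stable letter realises every instance of conjugation by `t` inside
`Aₙ`; it maps onto `G`. Sending `a tᵏ` to its formal counterpart in `Hₙ` is multiplicative at any
given pair of elements once `n` is large, so, `G` being finitely presented, for large `n` it agrees
on any given finite set with a homomorphism `s : G → Hₙ`. If `s` is right on `t` and on generators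
of `A₀`, it is right on all of `Aₙ`, because `Aₙ` is reached from `A₀` by conjugations that are
relations of `Hₙ`. So `s` is a left inverse of `Hₙ → G`, which is therefore an isomorphism.
-/

open Filter Multiplicative

theorem IsFinitelyPresented.group_isFinitelyPresented {G : Type*} [Group G]
    (hG : IsFinitelyPresented G) : Group.IsFinitelyPresented G := by
  obtain ⟨n, R, hR, ⟨e⟩⟩ := hG
  have : Finite R := hR
  exact .equiv e.symm

theorem group_fg_of_isFinitelyPresented (G : Type*) [Group G] [Group.IsFinitelyPresented G] :
    Group.FG G := by
  obtain ⟨_, _, hπ, _⟩ := Group.IsFinitelyPresented.out (G := G)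
  exact Group.fg_of_surjective hπ

theorem fg_map_of_fg {G H : Type*} [Group G] [Group H] {A : Subgroup G} (hA : A.FG) (f : G →* H) :
    (A.map f).FG :=
  (Subgroup.fg_iff_submonoid_fg _).2 (((Subgroup.fg_iff_submonoid_fg A).1 hA).map f)

section EventuallyMultiplicative

variable {G α : Type*} [Group G] {H : α → Type*} [∀ n, Group (H n)] {l : Filter α}
  {σ : ∀ n, G → H n}

theorem eventually_lift_eq_of_eventually_map_mul
    (hσ : ∀ g g', ∀ᶠ n in l, σ n (g * g') = σ n g * σ n g')
    {ι : Type*} (π : FreeGroup ι →* G) (w : FreeGroup ι) :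
    ∀ᶠ n in l, FreeGroup.lift (fun i => σ n (π (.of i))) w = σ n (π w) := by
  have hσ_one : ∀ᶠ n in l, σ n 1 = 1 := (hσ 1 1).mono fun n h => by simpa using h
  induction w using FreeGroup.induction_on with
  | C1 => exact hσ_one.mono fun n h => by simp only [map_one, h]
  | of i => simp
  | inv_of i _ =>
    filter_upwards [hσ_one, hσ (π (.of i)) (π (.of i))⁻¹] with n h_one h_mul
    rw [mul_inv_cancel, h_one] at h_mul
    simp [inv_eq_of_mul_eq_one_right h_mul.symm]
  | mul x y hx hy =>
    filter_upwards [hx, hy, hσ (π x) (π y)] with n hx hy h_mul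
    rw [map_mul, hx, hy, map_mul, h_mul]

theorem exists_monoidHom_eventually_eq [Group.IsFinitelyPresented G]
    (hσ : ∀ g g', ∀ᶠ n in l, σ n (g * g') = σ n g * σ n g') :
    ∃ s : ∀ n, G →* H n, ∀ g, ∀ᶠ n in l, s n g = σ n g := by
  classical
  obtain ⟨m, π, hπ, R, hR, hker⟩ := Group.IsFinitelyPresented.out (G := G)
  let f (n : α) : FreeGroup (Fin m) →* H n := FreeGroup.lift fun i => σ n (π (.of i))
  have hf (w) : ∀ᶠ n in l, f n w = σ n (π w) := eventually_lift_eq_of_eventually_map_mul hσ π w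
  have hfR : ∀ᶠ n in l, π.ker ≤ (f n).ker := by
    have hrel : ∀ᶠ n in l, ∀ r ∈ R, f n r = 1 := by
      refine (eventually_all_finite hR).2 fun r hr => ?_
      have hr : π r = 1 := MonoidHom.mem_ker.1 (hker ▸ Subgroup.subset_normalClosure hr)
      filter_upwards [hf r, hf 1] with n hn hn_one
      rw [hn, hr, ← map_one π, ← hn_one, map_one]
    exact hrel.mono fun n h => hker ▸ Subgroup.normalClosure_le_normal h
  refine ⟨fun n => if h : π.ker ≤ (f n).ker then π.liftOfSurjective hπ ⟨f n, h⟩ else 1,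
    hπ.forall.2 fun w => ?_⟩
  filter_upwards [hfR, hf w] with n hn hw
  rw [dif_pos hn, ← hw]
  exact π.liftOfRightInverse_comp_apply _ (Function.rightInverse_surjInv hπ) ⟨f n, hn⟩ w

end EventuallyMultiplicative

section KernelPart

variable {G : Type*} [Group G] {t : G} {ε : G →* Multiplicative ℤ}

/-- The factor `a ∈ ker ε` in the decomposition `g = a * t ^ k`, where `ε t = 1` and `k = ε g`. -/
def kernelPart (t : G) (ε : G →* Multiplicative ℤ) (g : G) : G := g * (t ^ (ε g).toAdd)⁻¹

theorem kernelPart_mem (ht : ε t = ofAdd 1) (g : G) : kernelPart t ε g ∈ ε.ker := by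
  rw [MonoidHom.mem_ker, kernelPart, map_mul, map_inv, map_zpow, ht, ← ofAdd_zsmul]
  simp

theorem kernelPart_mul (g g' : G) :
    kernelPart t ε (g * g') = kernelPart t ε g *
      (t ^ (ε g).toAdd * kernelPart t ε g' * (t ^ (ε g).toAdd)⁻¹) := by
  simp only [kernelPart, map_mul, toAdd_mul]
  group

end KernelPart

section ConjHNN

variable {G : Type*} [Group G]

/-- The subgroup `B = A ∩ t⁻¹ A t` of `A`, the largest one that conjugation by `t` maps into `A`. -/
def conjDomain (t : G) (A : Subgroup G) : Subgroup A :=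
  (A.comap (MulAut.conj t).toMonoidHom).subgroupOf A

theorem mem_conjDomain {t : G} {A : Subgroup G} {a : A} :
    a ∈ conjDomain t A ↔ t * a * t⁻¹ ∈ A := by
  simp [conjDomain, Subgroup.mem_subgroupOf]

/-- Conjugation by `t` as an isomorphism from `A ∩ t⁻¹ A t` onto `A ∩ t A t⁻¹`. -/
def conjDomainEquiv (t : G) (A : Subgroup G) : conjDomain t A ≃* conjDomain t⁻¹ A where
  toFun a := ⟨⟨t * a * t⁻¹, mem_conjDomain.1 a.2⟩, mem_conjDomain.2 (by simp [mul_assoc])⟩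
  invFun a :=
    ⟨⟨t⁻¹ * a * t, by simpa using mem_conjDomain.1 a.2⟩, mem_conjDomain.2 (by simp [mul_assoc])⟩
  left_inv a := by ext; simp [mul_assoc]
  right_inv a := by ext; simp [mul_assoc]
  map_mul' a b := by ext; simp [mul_assoc]

/-- The HNN extension of `A` in which the stable letter conjugates `a` to `t * a * t⁻¹` whenever
both are in `A`. -/
abbrev ConjHNN (t : G) (A : Subgroup G) : Type _ :=
  HNNExtension A (conjDomain t A) (conjDomain t⁻¹ A) (conjDomainEquiv t A)

namespace ConjHNN

open HNNExtension (of)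

/-- The stable letter of `ConjHNN t A`. -/
abbrev stable (t : G) (A : Subgroup G) : ConjHNN t A := HNNExtension.t

theorem of_conj {t : G} {A : Subgroup G} {a : G} (ha : a ∈ A) (hta : t * a * t⁻¹ ∈ A) :
    (of ⟨t * a * t⁻¹, hta⟩ : ConjHNN t A) = stable t A * of ⟨a, ha⟩ * (stable t A)⁻¹ :=
  HNNExtension.equiv_eq_conj ⟨⟨a, ha⟩, mem_conjDomain.2 hta⟩

/-- The homomorphism `ConjHNN t A →* G` that is the inclusion on `A` and sends the stable letter
to `t`. -/
def toGroup (t : G) (A : Subgroup G) : ConjHNN t A →* G :=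
  HNNExtension.lift A.subtype t fun a => by simp [conjDomainEquiv]

@[simp]
theorem toGroup_of (t : G) (A : Subgroup G) (a : A) : toGroup t A (of a) = a :=
  HNNExtension.lift_of ..

@[simp]
theorem toGroup_stable (t : G) (A : Subgroup G) : toGroup t A (stable t A) = t :=
  HNNExtension.lift_t ..

theorem toGroup_surjective {t : G} {A : Subgroup G} (h : A ⊔ Subgroup.zpowers t = ⊤) :
    Function.Surjective (toGroup t A) := by
  rw [← MonoidHom.range_eq_top, eq_top_iff, ← h]
  exact sup_le (fun a ha => ⟨of ⟨a, ha⟩, toGroup_of ..⟩)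
    (Subgroup.zpowers_le.2 ⟨stable t A, toGroup_stable t A⟩)

theorem toGroup_injective_of_leftInverse {t : G} {A : Subgroup G} {s : G →* ConjHNN t A}
    (hst : s t = stable t A) (hsA : ∀ a : A, s a = of a) :
    Function.Injective (toGroup t A) := by
  have h : s.comp (toGroup t A) = .id _ := by ext <;> simp [hst, hsA]
  exact Function.LeftInverse.injective (DFunLike.congr_fun h)

/-- The elements of `A` on which `s : G →* ConjHNN t A` agrees with the embedding of `A`. -/
def agreement {t : G} {A : Subgroup G} (s : G →* ConjHNN t A) : Subgroup G :=
  ((s.comp A.subtype).eqLocus of).map A.subtype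

theorem mem_agreement {t : G} {A : Subgroup G} {s : G →* ConjHNN t A} {a : G} :
    a ∈ agreement s ↔ ∃ ha : a ∈ A, s a = of ⟨a, ha⟩ := by
  simp only [agreement, Subgroup.mem_map, Subtype.exists, Subgroup.subtype_apply,
    exists_and_right, exists_eq_right]
  rfl

theorem conj_mem_agreement {t : G} {A : Subgroup G} {s : G →* ConjHNN t A}
    (hst : s t = stable t A) {a : G} (ha : a ∈ agreement s) (hta : t * a * t⁻¹ ∈ A) :
    t * a * t⁻¹ ∈ agreement s := by
  obtain ⟨haA, has⟩ := mem_agreement.1 ha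
  exact mem_agreement.2 ⟨hta, by rw [of_conj haA hta, map_mul, map_mul, map_inv, hst, has]⟩

theorem inv_conj_mem_agreement {t : G} {A : Subgroup G} {s : G →* ConjHNN t A}
    (hst : s t = stable t A) {a : G} (ha : a ∈ agreement s) (hta : t⁻¹ * a * t ∈ A) :
    t⁻¹ * a * t ∈ agreement s := by
  obtain ⟨haA, has⟩ := mem_agreement.1 ha
  have hconj : t * (t⁻¹ * a * t) * t⁻¹ = a := by group
  have hof := of_conj hta (hconj.symm ▸ haA)
  simp only [hconj] at hof
  refine mem_agreement.2 ⟨hta, ?_⟩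
  rw [map_mul, map_mul, map_inv, hst, has, hof]
  group

open Classical in
/-- The embedding of `A` in `ConjHNN t A`, extended to `G` by the value `1` outside `A` so that
elements of `G` can be mapped to `ConjHNN t A` for varying `A`. -/
noncomputable def ofOrOne (t : G) (A : Subgroup G) (g : G) : ConjHNN t A :=
  if hg : g ∈ A then of ⟨g, hg⟩ else 1

theorem ofOrOne_of_mem {t : G} {A : Subgroup G} {a : G} (ha : a ∈ A) :
    ofOrOne t A a = of ⟨a, ha⟩ :=
  dif_pos ha

theorem ofOrOne_one (t : G) (A : Subgroup G) : ofOrOne t A 1 = 1 :=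
  (ofOrOne_of_mem A.one_mem).trans (map_one of)

theorem ofOrOne_mul {t : G} {A : Subgroup G} {a b : G} (ha : a ∈ A) (hb : b ∈ A) :
    ofOrOne t A (a * b) = ofOrOne t A a * ofOrOne t A b := by
  rw [ofOrOne_of_mem ha, ofOrOne_of_mem hb, ofOrOne_of_mem (mul_mem ha hb), ← map_mul]
  rfl

theorem ofOrOne_conj {t : G} {A : Subgroup G} {a : G} (ha : a ∈ A) (hta : t * a * t⁻¹ ∈ A) :
    ofOrOne t A (t * a * t⁻¹) = stable t A * ofOrOne t A a * (stable t A)⁻¹ := by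
  rw [ofOrOne_of_mem ha, ofOrOne_of_mem hta, of_conj ha hta]

section Exhaustion

variable {α : Type*} {l : Filter α} {A : α → Subgroup G}

theorem eventually_ofOrOne_zpow_conj {K : Subgroup G} [K.Normal]
    (hA : ∀ a ∈ K, ∀ᶠ n in l, a ∈ A n) (t : G) (k : ℤ) {a : G} (ha : a ∈ K) :
    ∀ᶠ n in l, ofOrOne t (A n) (t ^ k * a * (t ^ k)⁻¹) =
      stable t (A n) ^ k * ofOrOne t (A n) a * (stable t (A n) ^ k)⁻¹ := by
  have hmem (j : ℤ) : ∀ᶠ n in l, t ^ j * a * (t ^ j)⁻¹ ∈ A n :=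
    hA _ (Subgroup.Normal.conj_mem ‹_› a ha _)
  have hconj (j : ℤ) :
      t * (t ^ j * a * (t ^ j)⁻¹) * t⁻¹ = t ^ (j + 1) * a * (t ^ (j + 1))⁻¹ := by group
  have hstep (j : ℤ) : ∀ᶠ n in l, ofOrOne t (A n) (t ^ (j + 1) * a * (t ^ (j + 1))⁻¹) =
      stable t (A n) * ofOrOne t (A n) (t ^ j * a * (t ^ j)⁻¹) * (stable t (A n))⁻¹ := by
    filter_upwards [hmem j, hmem (j + 1)] with n hj hj'
    rw [← hconj] at hj' ⊢
    exact ofOrOne_conj hj hj'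
  induction k with
  | zero => simp
  | succ i ih =>
    filter_upwards [ih, hstep i] with n ih h
    rw [h, ih]
    group
  | pred i ih =>
    filter_upwards [ih, hstep (-i - 1)] with n ih h
    rw [sub_add_cancel, ih, eq_mul_inv_iff_mul_eq, ← inv_mul_eq_iff_eq_mul] at h
    rw [← h]
    group

variable {t : G} {ε : G →* Multiplicative ℤ}

/-- The element of `ConjHNN t A` with the same normal form `a * t ^ k` as `g`, meaningful only if
the kernel part `a` of `g` is in `A`. -/
noncomputable def normalForm (t : G) (ε : G →* Multiplicative ℤ) (A : Subgroup G) (g : G) :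
    ConjHNN t A :=
  ofOrOne t A (kernelPart t ε g) * stable t A ^ (ε g).toAdd

theorem normalForm_self (ht : ε t = ofAdd 1) (A : Subgroup G) :
    normalForm t ε A t = stable t A := by
  simp [normalForm, kernelPart, ht, ofOrOne_one]

theorem normalForm_of_mem_ker {a : G} (ha : a ∈ ε.ker) (A : Subgroup G) :
    normalForm t ε A a = ofOrOne t A a := by
  simp [normalForm, kernelPart, MonoidHom.mem_ker.1 ha]

theorem eventually_normalForm_mul (ht : ε t = ofAdd 1)
    (hA : ∀ a ∈ ε.ker, ∀ᶠ n in l, a ∈ A n) (g g' : G) :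
    ∀ᶠ n in l,
      normalForm t ε (A n) (g * g') = normalForm t ε (A n) g * normalForm t ε (A n) g' := by
  have hg := kernelPart_mem ht g
  have hg' := kernelPart_mem ht g'
  filter_upwards [hA _ hg, hA _ ((MonoidHom.normal_ker ε).conj_mem _ hg' (t ^ (ε g).toAdd)),
    eventually_ofOrOne_zpow_conj hA t (ε g).toAdd hg'] with n hmem hmem' hconj
  simp only [normalForm, kernelPart_mul, ofOrOne_mul hmem hmem', hconj, map_mul, toAdd_mul,
    zpow_add]
  group

theorem exists_monoidHom_eventually_eq_ofOrOne [Group.IsFinitelyPresented G]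
    (ht : ε t = ofAdd 1) (hA : ∀ a ∈ ε.ker, ∀ᶠ n in l, a ∈ A n) :
    ∃ s : ∀ n, G →* ConjHNN t (A n), (∀ᶠ n in l, s n t = stable t (A n)) ∧
      ∀ a ∈ ε.ker, ∀ᶠ n in l, s n a = ofOrOne t (A n) a := by
  obtain ⟨s, hs⟩ := exists_monoidHom_eventually_eq (eventually_normalForm_mul ht hA)
  exact ⟨s, (hs t).mono fun n h => h.trans (normalForm_self ht _),
    fun a ha => (hs a).mono fun n h => h.trans (normalForm_of_mem_ker ha _)⟩

end Exhaustion

end ConjHNN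

end ConjHNN

section ConjChain

variable {G : Type*} [Group G] {t : G} {A : Subgroup G}

/-- The increasing sequence of subgroups `Aₙ` with `A₀ = A` and `Aₙ₊₁` generated by `Aₙ` and its
conjugates by `t` and `t⁻¹`. -/
def conjChain (t : G) (A : Subgroup G) : ℕ → Subgroup G
  | 0 => A
  | n + 1 => conjChain t A n ⊔
      ((conjChain t A n).map (MulAut.conj t).toMonoidHom ⊔
        (conjChain t A n).map (MulAut.conj t⁻¹).toMonoidHom)

theorem conjChain_monotone (t : G) (A : Subgroup G) : Monotone (conjChain t A) :=
  monotone_nat_of_le_succ fun _ => le_sup_left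

theorem conj_mem_conjChain_succ {n : ℕ} {a : G} (ha : a ∈ conjChain t A n) :
    t * a * t⁻¹ ∈ conjChain t A (n + 1) :=
  Subgroup.mem_sup_right (Subgroup.mem_sup_left ⟨a, ha, by simp⟩)

theorem inv_conj_mem_conjChain_succ {n : ℕ} {a : G} (ha : a ∈ conjChain t A n) :
    t⁻¹ * a * t ∈ conjChain t A (n + 1) :=
  Subgroup.mem_sup_right (Subgroup.mem_sup_right ⟨a, ha, by simp⟩)

theorem conjChain_fg (hA : A.FG) (n : ℕ) : (conjChain t A n).FG := by
  induction n with
  | zero => exact hA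
  | succ n ih => exact ih.sup ((fg_map_of_fg ih _).sup (fg_map_of_fg ih _))

theorem conjChain_le {H : Subgroup G} {n : ℕ} (hA : A ≤ H)
    (hconj : ∀ a ∈ H, t * a * t⁻¹ ∈ conjChain t A n → t * a * t⁻¹ ∈ H)
    (hinv_conj : ∀ a ∈ H, t⁻¹ * a * t ∈ conjChain t A n → t⁻¹ * a * t ∈ H) :
    conjChain t A n ≤ H := by
  suffices ∀ m ≤ n, conjChain t A m ≤ H from this n le_rfl
  intro m hm
  induction m with
  | zero => exact hA
  | succ m ih =>
    have hle := ih (by omega)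
    have hsucc := conjChain_monotone t A hm
    refine sup_le hle (sup_le ?_ ?_) <;> rintro _ ⟨a, ha, rfl⟩
    · exact hconj a (hle ha) (hsucc (conj_mem_conjChain_succ ha))
    · simpa using hinv_conj a (hle ha) (hsucc (inv_conj_mem_conjChain_succ ha))

theorem conjChain_le_of_normal {K : Subgroup G} [hK : K.Normal] (hA : A ≤ K) (n : ℕ) :
    conjChain t A n ≤ K :=
  conjChain_le hA (fun a ha _ => hK.conj_mem a ha t) (fun a ha _ => hK.conj_mem' a ha t)

theorem mem_iSup_conjChain {a : G} : a ∈ ⨆ n, conjChain t A n ↔ ∃ n, a ∈ conjChain t A n :=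
  Subgroup.mem_iSup_of_directed (conjChain_monotone t A).directed_le

theorem iSup_conjChain_normal (h : A ⊔ Subgroup.zpowers t = ⊤) :
    (⨆ n, conjChain t A n).Normal := by
  rw [← Subgroup.normalizer_eq_top_iff, eq_top_iff, ← h]
  refine sup_le ((le_iSup (conjChain t A) 0).trans Subgroup.le_normalizer)
    (Subgroup.zpowers_le.2 (Subgroup.mem_normalizer_iff.2 fun a => ?_))
  simp only [mem_iSup_conjChain]
  refine ⟨fun ⟨n, ha⟩ => ⟨n + 1, conj_mem_conjChain_succ ha⟩, fun ⟨n, ha⟩ => ⟨n + 1, ?_⟩⟩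
  simpa [mul_assoc] using inv_conj_mem_conjChain_succ ha

theorem ker_le_of_sup_zpowers_eq_top {ε : G →* Multiplicative ℤ} (ht : ε t = ofAdd 1)
    {U : Subgroup G} [U.Normal] (hU : U ≤ ε.ker) (h : U ⊔ Subgroup.zpowers t = ⊤) : ε.ker ≤ U := by
  intro a ha
  obtain ⟨u, hu, _, ⟨k, rfl⟩, rfl⟩ := Subgroup.mem_sup_of_normal_left.1 (h ▸ Subgroup.mem_top a)
  have hk : k = 0 := by
    simpa [MonoidHom.mem_ker, MonoidHom.mem_ker.1 (hU hu), ht, ← ofAdd_zsmul] using ha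
  simpa [hk] using hu

theorem eventually_mem_conjChain {ε : G →* Multiplicative ℤ} (ht : ε t = ofAdd 1)
    (hA : A ≤ ε.ker) (h : A ⊔ Subgroup.zpowers t = ⊤) {a : G} (ha : a ∈ ε.ker) :
    ∀ᶠ n in atTop, a ∈ conjChain t A n := by
  have := iSup_conjChain_normal h
  have hle : A ≤ ⨆ n, conjChain t A n := le_iSup (conjChain t A) 0
  obtain ⟨N, hN⟩ := mem_iSup_conjChain.1 <| ker_le_of_sup_zpowers_eq_top ht
    (iSup_le (conjChain_le_of_normal hA)) (top_unique (h ▸ sup_le_sup_right hle _)) ha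
  exact eventually_atTop.2 ⟨N, fun n hn => conjChain_monotone t A hn hN⟩

end ConjChain

section Splitting

variable {G : Type*} [Group G] {t : G} {ε : G →* Multiplicative ℤ}

theorem exists_fg_le_ker_sup_zpowers_eq_top [hG : Group.FG G] (ht : ε t = ofAdd 1) :
    ∃ A : Subgroup G, A.FG ∧ A ≤ ε.ker ∧ A ⊔ Subgroup.zpowers t = ⊤ := by
  obtain ⟨S, hS, hfin⟩ := Group.fg_iff.1 hG
  let A := Subgroup.closure (kernelPart t ε '' S)
  refine ⟨A, (Subgroup.fg_iff _).2 ⟨_, rfl, hfin.image _⟩, ?_, ?_⟩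
  · rw [Subgroup.closure_le]
    rintro _ ⟨g, -, rfl⟩
    exact kernelPart_mem ht g
  · rw [eq_top_iff, ← hS, Subgroup.closure_le]
    intro g hg
    have hmem : kernelPart t ε g ∈ A := Subgroup.subset_closure ⟨g, hg, rfl⟩
    simpa [kernelPart] using
      Subgroup.mul_mem_sup hmem (Subgroup.zpow_mem_zpowers t (ε g).toAdd)

theorem eventually_le_agreement {α : Type*} {l : Filter α} {A : α → Subgroup G}
    {s : ∀ n, G →* ConjHNN t (A n)} {A₀ : Subgroup G} (hfg : A₀.FG)
    (hA : ∀ a ∈ A₀, ∀ᶠ n in l, a ∈ A n)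
    (hs : ∀ a ∈ A₀, ∀ᶠ n in l, s n a = ConjHNN.ofOrOne t (A n) a) :
    ∀ᶠ n in l, A₀ ≤ ConjHNN.agreement (s n) := by
  obtain ⟨S, rfl⟩ := hfg
  simp only [Subgroup.closure_le]
  refine (eventually_all_finset S).2 fun a ha => ?_
  have ha' := Subgroup.subset_closure ha
  filter_upwards [hA a ha', hs a ha'] with n hmem hsa
  exact ConjHNN.mem_agreement.2 ⟨hmem, hsa.trans (ConjHNN.ofOrOne_of_mem hmem)⟩

theorem ConjHNN.toGroup_conjChain_bijective {A : Subgroup G} (h : A ⊔ Subgroup.zpowers t = ⊤)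
    {n : ℕ} {s : G →* ConjHNN t (conjChain t A n)} (hst : s t = stable t _)
    (hsA : A ≤ agreement s) : Function.Bijective (toGroup t (conjChain t A n)) := by
  have hle : conjChain t A n ≤ agreement s :=
    conjChain_le hsA (fun _ => conj_mem_agreement hst) (fun _ => inv_conj_mem_agreement hst)
  have htop : conjChain t A n ⊔ Subgroup.zpowers t = ⊤ :=
    top_unique (h ▸ sup_le_sup_right (conjChain_monotone t A n.zero_le) _)
  exact ⟨toGroup_injective_of_leftInverse hst fun a => (mem_agreement.1 (hle a.2)).2,
    toGroup_surjective htop⟩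

theorem exists_fg_le_ker_toGroup_bijective [Group.IsFinitelyPresented G] (ht : ε t = ofAdd 1) :
    ∃ A : Subgroup G, A.FG ∧ A ≤ ε.ker ∧ Function.Bijective (ConjHNN.toGroup t A) := by
  have := group_fg_of_isFinitelyPresented G
  obtain ⟨A, hfg, hker, htop⟩ := exists_fg_le_ker_sup_zpowers_eq_top ht
  have hmem (a) (ha : a ∈ ε.ker) := eventually_mem_conjChain ht hker htop ha
  obtain ⟨s, hst, hs⟩ := ConjHNN.exists_monoidHom_eventually_eq_ofOrOne ht hmem
  have hagree := eventually_le_agreement hfg (fun a ha => hmem a (hker ha))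
    (fun a ha => hs a (hker ha))
  obtain ⟨n, hst, hsA⟩ := (hst.and hagree).exists
  exact ⟨conjChain t A n, conjChain_fg hfg n, conjChain_le_of_normal hker n,
    ConjHNN.toGroup_conjChain_bijective htop hst hsA⟩

end Splitting

/-- A finitely presented group `G` with a surjection `ε` onto `ℤ`
splits as an HNN extension of a finitely generated subgroup `A ≤ ker ε`, over an
isomorphism `ψ` between two subgroups `B, C` of `A`; the isomorphism of the HNN
extension with `G` carries the canonical copy of `A` to the inclusion `A ≤ G`. -/
theorem stmt12 {G : Type*} [Group G] (hfp : IsFinitelyPresented G)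
    (ε : G →* Multiplicative ℤ) (hsurj : Function.Surjective ε) :
    ∃ A : Subgroup G, A.FG ∧ A ≤ ε.ker ∧
      ∃ (B C : Subgroup A) (ψ : B ≃* C) (θ : HNNExtension A B C ψ ≃* G),
        θ.toMonoidHom.comp HNNExtension.of = A.subtype := by
  have := hfp.group_isFinitelyPresented
  obtain ⟨t, ht⟩ := hsurj (ofAdd 1)
  obtain ⟨A, hfg, hker, hbij⟩ := exists_fg_le_ker_toGroup_bijective ht
  exact ⟨A, hfg, hker, _, _, _, .ofBijective _ hbij, MonoidHom.ext (ConjHNN.toGroup_of t A)⟩
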